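/- arXiv:2209.07203 — 12 statements merged into one kernel-verified Lean document; each statement's English description precedes it below -/
import Mathlib

section
/- Let (S,[-,-,-]) be a semiheap, φ : S → S a function, and suppose there exist a,b ∈ S such that the middle shift μ_{ab} : x ↦ [a,x,b] is injective. Then the twisted operation [x,y,z]_φ := [x, φ(y), z] is a semiheap operation on S if and only if φ is a warp of S. -/
/-- If `(S,t)` is a semiheap and some middle shift `μ_{ab} : x ↦ t a x b`
is injective, then the twisted operation `[x,y,z]_φ := t x (φ y) z` is a semiheap
operation iff `φ` is a warp. -/
theorem stmt_2 {S : Type*} (t : S → S → S → S)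
    (h1 : ∀ a b c d e, t (t a b c) d e = t a (t d c b) e)
    (h2 : ∀ a b c d e, t (t a b c) d e = t a b (t c d e))
    (φ : S → S) (a b : S)
    (hinj : Function.Injective (fun x => t a x b)) :
    ((∀ x y z d e, t (t x (φ y) z) (φ d) e = t x (φ (t d (φ z) y)) e) ∧
     (∀ x y z d e, t (t x (φ y) z) (φ d) e = t x (φ y) (t z (φ d) e)))
    ↔ (∀ x y z, φ (t x (φ y) z) = t (φ x) y (φ z)) := by
  constructor
  · rintro ⟨k, -⟩ x y z
    apply hinj
    show t a (φ (t x (φ y) z)) b = t a (t (φ x) y (φ z)) b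
    rw [← k, h1]
  · intro w
    refine ⟨fun x y z d e => ?_, fun x y z d e => h2 _ _ _ _ _⟩
    rw [w, h1]
end

section
/- Let (S,[-,-,-]) be an abelian semiheap. Then for every e ∈ S the middle shift μ_{ee} : x ↦ [e,x,e] is a warp of S, i.e. μ_{ee}([a, μ_{ee}(b), c]) = [μ_{ee}(a), b, μ_{ee}(c)] for all a,b,c ∈ S. -/
/-- In an abelian semiheap `(S,t)`, every middle shift
`μ_{ee} : x ↦ t e x e` is a warp. -/
theorem stmt_3 {S : Type*} (t : S → S → S → S)
    (h1 : ∀ a b c d e, t (t a b c) d e = t a (t d c b) e)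
    (h2 : ∀ a b c d e, t (t a b c) d e = t a b (t c d e))
    (habel : ∀ a b c, t a b c = t c b a)
    (e : S) :
    ∀ a b c, t e (t a (t e b e) c) e = t (t e a e) b (t e c e) := by
  intro a b c
  rw [habel a _ c, ← h1, h2, h2 e b e c e, ← h2]
end

section
/- Let (S,[-,-,-]) be a semiheap, e ∈ S, and suppose the middle shift μ_{ee} : x ↦ [e,x,e] is surjective. Then μ_{ee} is a warp of S if and only if S is an abelian semiheap. -/
/-- If the middle shift `μ_{ee}` of a semiheap `(S,t)` is surjective,
then `μ_{ee}` is a warp iff `S` is abelian. -/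
theorem stmt_4 {S : Type*} (t : S → S → S → S)
    (h1 : ∀ a b c d e, t (t a b c) d e = t a (t d c b) e)
    (h2 : ∀ a b c d e, t (t a b c) d e = t a b (t c d e))
    (e : S)
    (hsurj : Function.Surjective (fun x => t e x e)) :
    (∀ a b c, t e (t a (t e b e) c) e = t (t e a e) b (t e c e))
    ↔ (∀ a b c, t a b c = t c b a) := by
  have key : ∀ a b c, t e (t a (t e b e) c) e = t (t e c e) b (t e a e) := by
    intro a b c
    rw [← h1 e c (t e b e) a e, ← h2 e c e b e, h2 (t e c e) b e a e]
  constructor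
  · intro h a b c
    obtain ⟨x, rfl⟩ := hsurj a
    obtain ⟨y, rfl⟩ := hsurj c
    exact (h x b y).symm.trans (key x b y)
  · intro h a b c
    rw [key, h]
end

section
/- Let (S,·) be a semigroup and φ : S → S a function. Suppose there exist l, r ∈ S such that the left multiplication map s ↦ l·s and the right multiplication map s ↦ s·r are both injective. Then the ternary operation [a,b,c]^φ := a · φ(b) · c makes S into a semiheap if and only if φ is a switch. -/
/-- If a semigroup has an injective left multiplication `l * -` and an
injective right multiplication `- * r`, then `[a,b,c]^φ := a * φ b * c` is a semiheap
operation iff `φ` is a switch. -/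
theorem stmt_7 {S : Type*} [Semigroup S] (φ : S → S) (l r : S)
    (hl : Function.Injective (fun s => l * s))
    (hr : Function.Injective (fun s => s * r)) :
    ((∀ a b c d e : S, (a * φ b * c) * φ d * e = a * φ (d * φ c * b) * e) ∧
     (∀ a b c d e : S, (a * φ b * c) * φ d * e = a * φ b * (c * φ d * e)))
    ↔ (∀ a b c : S, φ (a * φ b * c) = φ c * b * φ a) := by
  constructor
  · rintro ⟨h, -⟩ a b c
    apply hl
    apply hr
    have := h l c b a r
    simp only [mul_assoc] at this ⊢
    exact this.symm
  · intro h
    refine ⟨fun a b c d e => ?_, fun a b c d e => ?_⟩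
    · rw [h]
      simp only [mul_assoc]
    · simp only [mul_assoc]
end

section
/- Let (S,[-,-,-]) be a semiheap and e, a ∈ S such that [e,a,x] = [a,e,x] = [x,e,a] = [x,a,e] for all x ∈ S. Then the middle shift μ_{ee} : x ↦ [e,x,e] is a switch for the semigroup (S, ∘_a), where x ∘_a y := [x,a,y]; that is, μ_{ee}(x ∘_a μ_{ee}(y) ∘_a z) = μ_{ee}(z) ∘_a y ∘_a μ_{ee}(x) for all x,y,z ∈ S. -/
/-- If `e, a ∈ S` satisfy `[e,a,x] = [a,e,x] = [x,e,a] = [x,a,e]` for all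
`x`, then the middle shift `μ_{ee}` is a switch for the retract semigroup `(S, ∘_a)`,
`x ∘_a y := t x a y`. -/
theorem stmt_8 {S : Type*} (t : S → S → S → S)
    (h1 : ∀ a b c d e, t (t a b c) d e = t a (t d c b) e)
    (h2 : ∀ a b c d e, t (t a b c) d e = t a b (t c d e))
    (e a : S)
    (hc : ∀ x, t e a x = t a e x ∧ t a e x = t x e a ∧ t x e a = t x a e) :
    ∀ x y z, t e (t (t x a (t e y e)) a z) e = t (t (t e z e) a y) a (t e x e) := by
  intro x y z
  have k1 : t (t e z a) e y = t (t e z e) a y := by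
    rw [h1, h1, (hc z).1]
  have k2 : ∀ p, t (t p e a) x e = t (t p a e) x e := by
    intro p
    rw [h1, h1, (hc x).2.2]
  have l : t e (t (t x a (t e y e)) a z) e = t (t (t (t e z a) e y) e a) x e := by
    simp only [← h1, ← h2]
  have r : t (t (t e z e) a y) a (t e x e) = t (t (t (t e z e) a y) a e) x e := by
    simp only [← h2]
  rw [l, r, k1, k2]
end

section
/- Let (S,·,1) be a monoid, φ : S → S a switch, and u ∈ S with φ(u) = 1. Then φ is a bijection, with inverse given by the composition x ↦ u · φ(x) · u; that is, u · φ(φ(a)) · u = a for all a ∈ S and φ(u · φ(b) · u) = b for all b ∈ S. -/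
/-- For a monoid `(S,*,1)`, a switch `φ`, and `u` with `φ u = 1`,
the map `φ` is a bijection with inverse `x ↦ u * φ x * u`. -/
theorem stmt_11 {S : Type*} [Monoid S] (φ : S → S)
    (hφ : ∀ a b c : S, φ (a * φ b * c) = φ c * b * φ a)
    (u : S) (hu : φ u = 1) :
    Function.Bijective φ ∧
    (∀ a : S, u * φ (φ a) * u = a) ∧
    (∀ b : S, φ (u * φ b * u) = b) := by
  have h : ∀ b : S, φ (u * φ b * u) = b := fun b => by simp [hφ, hu]
  have hi : Function.Injective φ := fun x y hxy => by
    rw [← h x, ← h y, hxy]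
  exact ⟨⟨hi, fun b => ⟨_, h b⟩⟩, fun a => hi (h (φ a)), h⟩
end

section
/- Let (S,[-,-,-]) be a semiheap with a biunit pair (a,b), and let φ : S → S be a bijective warp. Let c ∈ S be the element with φ(c) = b. Then (a,c) is a biunit pair in the twisted semiheap S_φ = (S, [x,y,z]_φ := [x, φ(y), z]), i.e. [a, φ(c), x] = x = [x, φ(a), c] for all x ∈ S. -/
/-- If `(a,b)` is a biunit pair of a semiheap `(S,t)` and `φ` is a
bijective warp with `φ c = b`, then `(a,c)` is a biunit pair of the twisted semiheap
`[x,y,z]_φ := t x (φ y) z`. -/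
theorem stmt_13 {S : Type*} (t : S → S → S → S)
    (h1 : ∀ a b c d e, t (t a b c) d e = t a (t d c b) e)
    (h2 : ∀ a b c d e, t (t a b c) d e = t a b (t c d e))
    (a b : S) (hbi : ∀ x, t a b x = x ∧ t x a b = x)
    (φ : S → S)
    (hwarp : ∀ x y z, φ (t x (φ y) z) = t (φ x) y (φ z))
    (hbij : Function.Bijective φ)
    (c : S) (hc : φ c = b) :
    ∀ x, t a (φ c) x = x ∧ t x (φ a) c = x := by
  intro x
  refine ⟨by rw [hc]; exact (hbi x).1, hbij.1 ?_⟩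
  rw [hwarp, hc]
  exact (hbi _).2
end

section
/- Let (S,[-,-,-]) be a semiheap with a biunit pair (a,c). Then the middle shift μ_{ac} : x ↦ [a,x,c] is an anti-automorphism of the semigroup (S, ∘_a) where x ∘_a y := [x,a,y], i.e. μ_{ac} is bijective and μ_{ac}(x) ∘_a μ_{ac}(y) = μ_{ac}(y ∘_a x) for all x,y ∈ S. Moreover, μ_{aa} : x ↦ [a,x,a] is an anti-isomorphism from (S, ∘_a) to (S, ∘_c), i.e. μ_{aa} is bijective and μ_{aa}(x ∘_a y) = μ_{aa}(y) ∘_c μ_{aa}(x) for all x,y ∈ S, where x ∘_c y := [x,c,y]. -/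
/-- For a biunit pair `(a,c)` of a semiheap `(S,t)`, the middle shift
`μ_{ac}` is an anti-automorphism of the retract semigroup `(S, ∘_a)`, and `μ_{aa}` is
an anti-isomorphism from `(S, ∘_a)` to `(S, ∘_c)`. -/
theorem stmt_14 {S : Type*} (t : S → S → S → S)
    (h1 : ∀ a b c d e, t (t a b c) d e = t a (t d c b) e)
    (h2 : ∀ a b c d e, t (t a b c) d e = t a b (t c d e))
    (a c : S) (hbi : ∀ x, t a c x = x ∧ t x a c = x) :
    (Function.Bijective (fun x => t a x c) ∧
     ∀ x y, t (t a x c) a (t a y c) = t a (t y a x) c) ∧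
    (Function.Bijective (fun x => t a x a) ∧
     ∀ x y, t a (t x a y) a = t (t a y a) c (t a x a)) := by
  have l1 : ∀ x, t a c x = x := fun x => (hbi x).1
  have r1 : ∀ x, t x a c = x := fun x => (hbi x).2
  have r2 : ∀ x, t x c a = x := fun x => by
    have h := h1 x c a a c
    rwa [r1, r1, r1] at h
  have l2 : ∀ x, t c a x = x := fun x => by
    have h := (h2 a c c a x).symm.trans (h1 a c c a x)
    rwa [l1, l1, l1] at h
  refine ⟨⟨?_, fun x y => ?_⟩, ⟨?_, fun x y => ?_⟩⟩
  · have inv : Function.Involutive (fun x => t a x c) := fun x => by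
      change t a (t a x c) c = x
      rw [← h1, l1, r1]
    exact inv.bijective
  · rw [h2, l2, ← h2, h1]
  · refine Function.bijective_iff_has_inverse.mpr ⟨fun x => t c x c, fun x => ?_, fun x => ?_⟩
    · change t c (t a x a) c = x
      rw [← h1, l2, r1]
    · change t a (t c x c) a = x
      rw [← h1, l1, r2]
  · rw [h2 a y a c, l1, ← h2, h1]
end

section
/- Let (S,[-,-,-]) be a semiheap with a biunit pair (a,b). Then: (i) b is a two-sided identity for the semigroup (S, ∘_a) where x ∘_a y := [x,a,y], so (S, ∘_a, b) is a monoid; (ii) the middle shift μ_{bb} : x ↦ [b,x,b] is a switch for (S, ∘_a), i.e. μ_{bb}(x ∘_a μ_{bb}(y) ∘_a z) = μ_{bb}(z) ∘_a y ∘_a μ_{bb}(x) for all x,y,z ∈ S; (iii) μ_{bb}(a) = b; and (iv) the original semiheap operation is recovered: [x,y,z] = x ∘_a μ_{bb}(y) ∘_a z for all x,y,z ∈ S. -/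
/-- For a biunit pair `(a,b)` of a semiheap `(S,t)`:
(i) `(S, ∘_a, b)` is a monoid (`x ∘_a y := t x a y`, identity `b`);
(ii) `μ_{bb} : x ↦ t b x b` is a switch for `(S, ∘_a)`;
(iii) `μ_{bb} a = b`;
(iv) `t x y z = x ∘_a μ_{bb} y ∘_a z`. -/
theorem stmt_16 {S : Type*} (t : S → S → S → S)
    (h1 : ∀ a b c d e, t (t a b c) d e = t a (t d c b) e)
    (h2 : ∀ a b c d e, t (t a b c) d e = t a b (t c d e))
    (a b : S) (hbi : ∀ x, t a b x = x ∧ t x a b = x) :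
    ((∀ x y z, t (t x a y) a z = t x a (t y a z)) ∧
     (∀ x, t x a b = x) ∧ (∀ x, t b a x = x)) ∧
    (∀ x y z, t b (t (t x a (t b y b)) a z) b = t (t (t b z b) a y) a (t b x b)) ∧
    (t b a b = b) ∧
    (∀ x y z, t x y z = t (t x a (t b y b)) a z) := by
  have hl : ∀ x, t a b x = x := fun x => (hbi x).1
  have hr : ∀ x, t x a b = x := fun x => (hbi x).2
  have hb : ∀ z, t b a z = z := by
    intro z
    have h : t a (t a b b) z = t a b (t b a z) := by rw [← h1, h2]
    rw [hl, hl, hl] at h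
    exact h.symm
  have h4 : ∀ x y z, t x y z = t (t x a (t b y b)) a z := by
    intro x y z
    rw [h2, h2 b y b, hb, ← h2, hr]
  refine ⟨⟨fun x y z => h2 _ _ _ _ _, hr, hb⟩, ?_, hr b, h4⟩
  intro x y z
  rw [← h4, h2 b z b, hb, h2 b z y, ← h2 y a b, hr, ← h1, h2]
end

section
/- Let S be a semiheap with two biunit pairs (a,b) and (c,d). Then the left shift λ_{da} : x ↦ [d,a,x] is an isomorphism of monoids from (S, ∘_a, b) to (S, ∘_c, d): it is bijective (with inverse λ_{bc} : x ↦ [b,c,x]), satisfies λ_{da}(x ∘_a y) = λ_{da}(x) ∘_c λ_{da}(y) for all x,y ∈ S, and λ_{da}(b) = d. Moreover the switches μ_{bb} and μ_{dd} are related by λ_{da}(μ_{bb}(x)) = μ_{dd}(λ_{cb}(x)) for all x ∈ S, where λ_{cb} : x ↦ [c,b,x] is the inverse of λ_{ad} : x ↦ [a,d,x]. -/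
/-- For two biunit pairs `(a,b)` and `(c,d)` of a semiheap `(S,t)`, the
left shift `λ_{da} : x ↦ t d a x` is an isomorphism of monoids `(S, ∘_a, b) → (S, ∘_c, d)`
with inverse `λ_{bc}`; moreover `λ_{da} ∘ μ_{bb} = μ_{dd} ∘ λ_{cb}` where
`λ_{cb}` is the inverse of `λ_{ad}`. -/
theorem stmt_17 {S : Type*} (t : S → S → S → S)
    (h1 : ∀ a b c d e, t (t a b c) d e = t a (t d c b) e)
    (h2 : ∀ a b c d e, t (t a b c) d e = t a b (t c d e))
    (a b c d : S)
    (hab : ∀ x, t a b x = x ∧ t x a b = x)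
    (hcd : ∀ x, t c d x = x ∧ t x c d = x) :
    ((∀ x, t d a (t b c x) = x) ∧ (∀ x, t b c (t d a x) = x)) ∧
    (∀ x y, t d a (t x a y) = t (t d a x) c (t d a y)) ∧
    (t d a b = d) ∧
    ((∀ x, t c b (t a d x) = x) ∧ (∀ x, t a d (t c b x) = x)) ∧
    (∀ x, t d a (t b x b) = t d (t c b x) d) := by
  have A1 : ∀ x, t a b x = x := fun x => (hab x).1
  have A2 : ∀ x, t x a b = x := fun x => (hab x).2
  have C1 : ∀ x, t c d x = x := fun x => (hcd x).1
  have C2 : ∀ x, t x c d = x := fun x => (hcd x).2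
  have L : ∀ p q, (∀ x, t p q x = x) → ∀ z, t q p z = z := by
    intro p q h z
    have e := h1 p q q p z
    rw [h q, h z] at e
    exact e
  have R : ∀ p q, (∀ x, t x p q = x) → ∀ z, t z q p = z := by
    intro p q h z
    have e := h1 z q p p q
    rw [h, h, h] at e
    exact e
  have A3 := L a b A1
  have A4 := R a b A2
  have C3 := L c d C1
  have C4 := R c d C2
  refine ⟨⟨fun x => ?_, fun x => ?_⟩, fun x y => ?_, A2 d, ⟨fun x => ?_, fun x => ?_⟩, fun x => ?_⟩
  · rw [← h2, A2, C3]
  · rw [← h2, C2, A3]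
  · rw [← h2 (t d a x) c d a y, C2, h2]
  · rw [← h2, A4, C1]
  · rw [← h2, C4, A1]
  · rw [← h2, A2, ← h1, C2]
end

section
/- Let (S,·,1) be a monoid and φ : S → S a bijective switch. Then the pair (φ⁻¹(1), 1) is a biunit pair in the semiheap (S, [a,b,c]^φ := a · φ(b) · c); that is, φ⁻¹(1) · φ(1) · x = x = x · φ(1) · φ⁻¹(1) for all x ∈ S. -/
/-- For a monoid `(S,*,1)` with a bijective switch `φ`, the pair
`(φ⁻¹ 1, 1)` is a biunit pair of the semiheap `[a,b,c]^φ := a * φ b * c`. -/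
theorem stmt_18 {S : Type*} [Monoid S] (φ : S → S)
    (hφ : ∀ a b c : S, φ (a * φ b * c) = φ c * b * φ a)
    (hbij : Function.Bijective φ) :
    ∀ x : S, Function.invFun φ 1 * φ 1 * x = x ∧ x * φ 1 * Function.invFun φ 1 = x := by
  have hu : φ (Function.invFun φ 1) = 1 := Function.invFun_eq (hbij.2 1)
  generalize Function.invFun φ 1 = u at hu ⊢
  have h1 : u * φ 1 = 1 := by
    have h := hφ 1 u u
    simpa [hu] using h.symm
  have h2 : φ 1 * u = 1 := by
    have h := hφ u u 1
    simpa [hu] using h.symm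
  intro x
  exact ⟨by rw [h1, one_mul], by rw [mul_assoc, h2, mul_one]⟩
end

section
/- Let (D,[-,-,-]) be a diheap and let ψ : D → D be the function assigning to each a ∈ D the unique element ψ(a) such that (a, ψ(a)) is a biunit pair. Then ψ is an involution (ψ(ψ(a)) = a for all a), ψ is a semiheap automorphism satisfying ψ([a,b,c]) = [ψ(a), ψ(b), ψ(c)] for all a,b,c ∈ D (in particular ψ is a warp), and the twisted semiheap D_ψ = (D, [a,b,c]_ψ := [a, ψ(b), c]) is a heap, i.e. every element e ∈ D satisfies [e, ψ(e), x] = x = [x, ψ(e), e] for all x ∈ D. -/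
/-- Let `(D,t)` be a diheap with `ψ` assigning to each `a` its biunit
partner. Then `ψ` is an involution and a semiheap automorphism (hence a warp), and the
twisted semiheap `[a,b,c]_ψ := t a (ψ b) c` is a heap. -/
theorem stmt_19 {D : Type*} (t : D → D → D → D)
    (h1 : ∀ a b c d e, t (t a b c) d e = t a (t d c b) e)
    (h2 : ∀ a b c d e, t (t a b c) d e = t a b (t c d e))
    (ψ : D → D)
    (hψ : ∀ a, (∀ x, t a (ψ a) x = x) ∧ (∀ x, t x a (ψ a) = x)) :
    (∀ a, ψ (ψ a) = a) ∧
    (∀ a b c, ψ (t a b c) = t (ψ a) (ψ b) (ψ c)) ∧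
    (∀ a b c, ψ (t a (ψ b) c) = t (ψ a) b (ψ c)) ∧
    (∀ e x, t e (ψ e) x = x ∧ t x (ψ e) e = x) := by
  have inv : ∀ a, ψ (ψ a) = a := fun a => by
    have e1 := (hψ a).1 (ψ (ψ a))
    have e2 := (hψ (ψ a)).2 a
    exact e1.symm.trans e2
  have uniq : ∀ m n, (∀ x, t x m n = x) → ψ m = n := fun m n h => by
    have e1 := (hψ (ψ m)).1 n
    rw [inv] at e1
    exact (h (ψ m)).symm.trans e1
  have hom : ∀ a b c, ψ (t a b c) = t (ψ a) (ψ b) (ψ c) := fun a b c => by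
    apply uniq
    intro x
    rw [← h1, ← h2, (hψ a).2, h2, (hψ b).1, (hψ c).2]
  refine ⟨inv, hom, fun a b c => by rw [hom, inv], fun e x => ⟨(hψ e).1 x, ?_⟩⟩
  have := (hψ (ψ e)).2 x
  rwa [inv] at this
end
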